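/- Let P₁ be a noncompact locally compact Hausdorff space in which every σ-compact subset has compact closure, let P₂ be any locally compact Hausdorff space, and let K = P₁ ⊔ P₂ be their topological disjoint union. Let F : C₀(K) → C₀(K) be multiplication by the characteristic function of P₁ and let B be the closed unit ball of C₀(K). Then the image F(B) = {x ∈ C₀(K) : ‖x‖ ≤ 1 and x vanishes on P₂} is totally bounded with respect to every pseudometric d_{X,Φ}: for every (C_b(K), C₀(K))-admissible sequence X = (x_i)_{i∈ℕ} in C_b(K), every sequence Φ = (μ_k)_{k∈ℕ} of regular Borel probability measures on K, and every ε > 0, there exist finitely many elements y_1, …, y_m of F(B) such that for every y ∈ F(B) there is some l with d_{X,Φ}(y, y_l) < ε. -/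

import Mathlib

/-!
Each `Φ k` is regular, so its restriction to `P₁` is carried by a `σ`-compact set; by the
hypothesis on `P₁`, all these restrictions live on one compact set `C ⊆ P₁`
(`exists_isCompact_carrier`). Testing admissibility against a function of `C₀(K)` that equals `1`
on `C` shows that the tails of `∑ |X i|²` are uniformly small on `C` (`exists_uniform_tail`).
Together with the Cauchy-Schwarz inequality, this makes the tails of the sums defining `d_{X,Φ}`
small uniformly on `F(B)` and in `k` (`sum_sq_integral_le`). Only the finitely many functionals
`y ↦ ∫ conj y · X j dΦ k` with `j, k < N` remain; they map `F(B)` to a bounded subset of a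
finite-dimensional space, which is totally bounded.
-/

open ZeroAtInfty BoundedContinuousFunction MeasureTheory

/-- A sequence `(X i)` in `C_b(K)` is `(C_b(K), C₀(K))`-admissible: `‖X i‖ ≤ 1` for all `i`
and for every `v ∈ C₀(K)` the family of functions `(|X i|² · |v|²)` is summable in the norm
of `C₀(K)` with `∑' i, ‖X i t‖² · ‖v t‖² ≤ ‖v t‖²` for all `t ∈ K`. -/
def IsAdmissible {K : Type*} [TopologicalSpace K] (X : ℕ → (K →ᵇ ℂ)) : Prop :=
  (∀ i : ℕ, ‖X i‖ ≤ 1) ∧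
  ∀ v : C₀(K, ℂ),
    Summable (fun i : ℕ => star (X i) * X i * (star v.toBCF * v.toBCF)) ∧
    ∀ t : K, (∑' i : ℕ, ‖X i t‖ ^ 2 * ‖v t‖ ^ 2) ≤ ‖v t‖ ^ 2

/-- The pseudometric `d_{X,Φ}` on `C₀(K)`:
`d_{X,Φ}(y,z)² = sup_k ∑_{i=k}^∞ |∫ conj (y − z) · X i dμ_k|²`. -/
noncomputable def dXPhi {K : Type*} [TopologicalSpace K] [MeasurableSpace K]
    (X : ℕ → (K →ᵇ ℂ)) (Φ : ℕ → Measure K) (y z : C₀(K, ℂ)) : ℝ :=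
  Real.sqrt (⨆ k : ℕ, ∑' i : ℕ,
    ‖∫ t, (starRingEnd ℂ) (y t - z t) * X (i + k) t ∂(Φ k)‖ ^ 2)

/-- The Cauchy-Schwarz inequality against the constant function `1`. -/
lemma norm_integral_sq_le {Ω : Type*} [MeasurableSpace Ω] (μ : Measure Ω) [IsProbabilityMeasure μ]
    (f : Ω → ℂ) (hf : Integrable f μ) (hf2 : Integrable (fun t => ‖f t‖ ^ 2) μ) :
    ‖∫ t, f t ∂μ‖ ^ 2 ≤ ∫ t, ‖f t‖ ^ 2 ∂μ := by
  have h1 : ‖∫ t, f t ∂μ‖ ≤ ∫ t, ‖f t‖ ∂μ := norm_integral_le_integral_norm f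
  set c := ∫ t, ‖f t‖ ∂μ with hc
  have h3 : c ^ 2 ≤ ∫ t, ‖f t‖ ^ 2 ∂μ := by
    -- The variance `∫ (‖f‖ - c)²` is nonnegative.
    have h2 : 0 ≤ ∫ t, (‖f t‖ ^ 2 - 2 * c * ‖f t‖ + c ^ 2) ∂μ :=
      integral_nonneg fun t => by
        show 0 ≤ ‖f t‖ ^ 2 - 2 * c * ‖f t‖ + c ^ 2
        nlinarith [sq_nonneg (‖f t‖ - c)]
    rw [integral_add (f := fun t => ‖f t‖ ^ 2 - 2 * c * ‖f t‖) (hf2.sub (hf.norm.const_mul _))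
        (integrable_const _),
      integral_sub hf2 (hf.norm.const_mul _), integral_const_mul, ← hc] at h2
    simp at h2
    nlinarith
  exact (pow_le_pow_left₀ (norm_nonneg _) h1 2).trans h3

/-- A pointwise bound on a partial sum of `|w|² |X j|²` bounds the sum of the squared integrals,
with the same constant and hence uniformly over all probability measures. -/
lemma sum_sq_integral_le {K : Type*} [TopologicalSpace K] [MeasurableSpace K] [BorelSpace K]
    (μ : Measure K) [IsProbabilityMeasure μ] (X : ℕ → (K →ᵇ ℂ)) (w : C₀(K, ℂ))
    (T : Finset ℕ) (c : ℝ) (h : ∀ᵐ t ∂μ, ‖w t‖ ^ 2 * ∑ j ∈ T, ‖X j t‖ ^ 2 ≤ c) :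
    ∑ j ∈ T, ‖∫ t, (starRingEnd ℂ) (w t) * X j t ∂μ‖ ^ 2 ≤ c := by
  have hi : ∀ j, Integrable (fun t => (starRingEnd ℂ) (w t) * X j t) μ := fun j =>
    BoundedContinuousFunction.integrable μ (star w.toBCF * X j)
  have hi2 : ∀ j, Integrable (fun t => ‖(starRingEnd ℂ) (w t) * X j t‖ ^ 2) μ := fun j => by
    have := (BoundedContinuousFunction.integrable μ
      ((star (star w.toBCF * X j)) * (star w.toBCF * X j))).norm
    refine this.congr (Filter.Eventually.of_forall fun t => ?_)
    simp [pow_two]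
  calc ∑ j ∈ T, ‖∫ t, (starRingEnd ℂ) (w t) * X j t ∂μ‖ ^ 2
      ≤ ∑ j ∈ T, ∫ t, ‖(starRingEnd ℂ) (w t) * X j t‖ ^ 2 ∂μ :=
        Finset.sum_le_sum fun j _ => norm_integral_sq_le μ _ (hi j) (hi2 j)
    _ = ∫ t, ∑ j ∈ T, ‖(starRingEnd ℂ) (w t) * X j t‖ ^ 2 ∂μ :=
        (integral_finsetSum T fun j _ => hi2 j).symm
    _ ≤ ∫ _, c ∂μ := by
        refine integral_mono_ae (integrable_finsetSum T fun j _ => hi2 j)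
          (integrable_const c) ?_
        filter_upwards [h] with t ht
        refine le_trans (le_of_eq ?_) ht
        simp [Finset.mul_sum, mul_pow]
    _ = c := by simp

/-- A single compact subset of `P₁` carries the restrictions to `P₁` of countably many regular
measures. -/
lemma exists_isCompact_carrier {P₁ P₂ : Type*} [TopologicalSpace P₁] [T2Space P₁]
    [TopologicalSpace P₂] [T2Space P₂] [MeasurableSpace (P₁ ⊕ P₂)] [BorelSpace (P₁ ⊕ P₂)]
    (hIV : ∀ s : Set P₁, IsSigmaCompact s → IsCompact (closure s))
    (Φ : ℕ → Measure (P₁ ⊕ P₂))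
    (hΦp : ∀ k, IsProbabilityMeasure (Φ k)) (hΦr : ∀ k, (Φ k).Regular) :
    ∃ C : Set P₁, IsCompact C ∧ ∀ k, ∀ᵐ t ∂(Φ k), ∀ p : P₁, t = Sum.inl p → p ∈ C := by
  have hm : MeasurableSet (Set.range (Sum.inl : P₁ → P₁ ⊕ P₂)) :=
    isOpen_range_inl.measurableSet
  have hex : ∀ k n : ℕ, ∃ A ⊆ Set.range (Sum.inl : P₁ → P₁ ⊕ P₂), IsCompact A ∧
      Φ k (Set.range Sum.inl \ A) < ((n : ENNReal) + 1)⁻¹ := fun k n => by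
    have := hΦp k
    have := hΦr k
    exact hm.exists_isCompact_sdiff_lt (measure_ne_top _ _) (by simp)
  choose A hAs hAc hAm using hex
  let S : Set P₁ := ⋃ q : ℕ × ℕ, Sum.inl ⁻¹' A q.1 q.2
  have hS : IsSigmaCompact S := isSigmaCompact_iUnion _ fun q =>
    (Topology.IsClosedEmbedding.inl.isCompact_preimage (hAc q.1 q.2)).isSigmaCompact
  refine ⟨closure S, hIV S hS, fun k => ?_⟩
  have h0 : Φ k (Set.range Sum.inl \ Sum.inl '' S) = 0 := by
    refine le_antisymm (ENNReal.le_of_forall_pos_le_add fun r hr _ => ?_) (zero_le)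
    obtain ⟨n, hn⟩ := ENNReal.exists_inv_nat_lt (a := (r : ENNReal)) (by simpa using hr.ne')
    calc Φ k (Set.range Sum.inl \ Sum.inl '' S)
        ≤ Φ k (Set.range Sum.inl \ A k n) := by
          refine measure_mono (Set.sdiff_subset_sdiff_right fun t ht => ?_)
          obtain ⟨p, rfl⟩ := hAs k n ht
          exact ⟨p, Set.mem_iUnion.2 ⟨(k, n), ht⟩, rfl⟩
      _ ≤ ((n : ENNReal) + 1)⁻¹ := (hAm k n).le
      _ ≤ (n : ENNReal)⁻¹ := ENNReal.inv_le_inv.2 le_self_add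
      _ ≤ 0 + r := by simpa using hn.le
  have h1 : ∀ᵐ t ∂(Φ k), t ∉ Set.range (Sum.inl : P₁ → P₁ ⊕ P₂) \ Sum.inl '' S :=
    measure_eq_zero_iff_ae_notMem.1 h0
  filter_upwards [h1] with t ht p hp
  by_contra hpC
  refine ht ⟨⟨p, hp.symm⟩, ?_⟩
  rintro ⟨p', hp', rfl⟩
  obtain rfl := Sum.inl_injective hp
  exact hpC (subset_closure hp')

/-- Admissibility, tested against a function of `C₀(K)` equal to `1` on `C`, makes the series
`∑ |X i|²` converge uniformly on a compact set `C ⊆ P₁`. -/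
lemma exists_uniform_tail {P₁ P₂ : Type*} [TopologicalSpace P₁] [LocallyCompactSpace P₁]
    [T2Space P₁] [TopologicalSpace P₂] [T2Space P₂]
    (X : ℕ → ((P₁ ⊕ P₂) →ᵇ ℂ)) (hX : IsAdmissible X) (C : Set P₁) (hC : IsCompact C)
    (δ : ℝ) (hδ : 0 < δ) :
    ∃ N : ℕ, ∀ T : Finset ℕ, (∀ j ∈ T, N ≤ j) →
      ∀ p ∈ C, ∑ j ∈ T, ‖X j (Sum.inl p)‖ ^ 2 ≤ δ := by
  obtain ⟨g, hg1, -, hgs, -⟩ := exists_continuous_one_zero_of_isCompact hC isClosed_empty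
    (Set.disjoint_empty C)
  let f : P₁ ⊕ P₂ → ℂ := Sum.elim (fun p => (g p : ℂ)) (fun _ => 0)
  have hfc : Continuous f := by fun_prop
  have hfs : HasCompactSupport f := by
    refine HasCompactSupport.intro (hgs.image continuous_inl) fun t ht => ?_
    rcases t with p | q
    · have : p ∉ tsupport g := fun h => ht ⟨p, h, rfl⟩
      simp [f, image_eq_zero_of_notMem_tsupport this]
    · rfl
  let v : C₀(P₁ ⊕ P₂, ℂ) := ⟨⟨f, hfc⟩, hfs.is_zero_at_infty⟩
  have hv : ∀ p ∈ C, v (Sum.inl p) = 1 := fun p hp => by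
    show ((g p : ℝ) : ℂ) = 1
    simp [hg1 hp]
  obtain ⟨s, hs⟩ := summable_iff_vanishing_norm.1 (hX.2 v).1 δ hδ
  refine ⟨s.sup id + 1, fun T hT p hp => ?_⟩
  have hd : Disjoint T s := Finset.disjoint_left.2 fun j hj hjs => by
    have h1 := hT j hj
    have h2 : j ≤ s.sup id := Finset.le_sup (f := id) hjs
    omega
  have hb := (BoundedContinuousFunction.norm_coe_le_norm (∑ i ∈ T,
    star (X i) * X i * (star v.toBCF * v.toBCF)) (Sum.inl p)).trans (hs T hd).le
  have he : (∑ i ∈ T, star (X i) * X i * (star v.toBCF * v.toBCF)) (Sum.inl p)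
      = ((∑ j ∈ T, ‖X j (Sum.inl p)‖ ^ 2 : ℝ) : ℂ) := by
    rw [BoundedContinuousFunction.sum_apply, Complex.ofReal_sum]
    refine Finset.sum_congr rfl fun j _ => ?_
    have hv' : v.toBCF (Sum.inl p) = 1 := hv p hp
    simp [hv', Complex.conj_mul']
  rw [he, Complex.norm_real] at hb
  exact (le_abs_self _).trans hb

/-- Let `P₁` be a noncompact locally compact Hausdorff space in which every `σ`-compact
subset has compact closure, `P₂` any locally compact Hausdorff space, `K = P₁ ⊔ P₂`, and
`F` the multiplication by the characteristic function of `P₁`. Then the image of the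
closed unit ball under `F`, i.e. `{x ∈ C₀(K) : ‖x‖ ≤ 1, x vanishes on P₂}`, is totally
bounded with respect to every pseudometric `d_{X,Φ}` with `(C_b(K), C₀(K))`-admissible `X`
and `Φ` a sequence of regular Borel probability measures. -/
theorem image_unitBall_totallyBounded_sum
    (P₁ : Type*) [TopologicalSpace P₁] [LocallyCompactSpace P₁] [T2Space P₁]
    (P₂ : Type*) [TopologicalSpace P₂] [LocallyCompactSpace P₂] [T2Space P₂]
    [MeasurableSpace (P₁ ⊕ P₂)] [BorelSpace (P₁ ⊕ P₂)]
    (hnc : ¬ CompactSpace P₁)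
    (hIV : ∀ s : Set P₁, IsSigmaCompact s → IsCompact (closure s))
    (X : ℕ → ((P₁ ⊕ P₂) →ᵇ ℂ)) (hX : IsAdmissible X)
    (Φ : ℕ → Measure (P₁ ⊕ P₂))
    (hΦp : ∀ k, IsProbabilityMeasure (Φ k)) (hΦr : ∀ k, (Φ k).Regular)
    (ε : ℝ) (hε : 0 < ε) :
    ∃ (m : ℕ) (ys : Fin m → C₀(P₁ ⊕ P₂, ℂ)),
      (∀ l : Fin m, ‖ys l‖ ≤ 1 ∧ ∀ t : P₂, ys l (Sum.inr t) = 0) ∧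
      ∀ y : C₀(P₁ ⊕ P₂, ℂ), ‖y‖ ≤ 1 → (∀ t : P₂, y (Sum.inr t) = 0) →
        ∃ l : Fin m, dXPhi X Φ y (ys l) < ε := by
  obtain ⟨C, hC, hCae⟩ := exists_isCompact_carrier hIV Φ hΦp hΦr
  obtain ⟨N, hN⟩ := exists_uniform_tail X hX C hC (ε ^ 2 / 16) (by positivity)
  let B : Set C₀(P₁ ⊕ P₂, ℂ) := {y | ‖y‖ ≤ 1 ∧ ∀ t : P₂, y (Sum.inr t) = 0}
  let L : C₀(P₁ ⊕ P₂, ℂ) → (Fin N × Fin N → ℂ) := fun y q =>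
    ∫ t, (starRingEnd ℂ) (y t) * X q.2 t ∂(Φ q.1)
  have hpt : ∀ (y : C₀(P₁ ⊕ P₂, ℂ)) t, ‖y t‖ ≤ ‖y‖ := fun y t => by
    rw [← ZeroAtInftyContinuousMap.norm_toBCF_eq_norm]
    exact y.toBCF.norm_coe_le_norm t
  have hint : ∀ (y : C₀(P₁ ⊕ P₂, ℂ)) j k,
      Integrable (fun t => (starRingEnd ℂ) (y t) * X j t) (Φ k) := fun y j k =>
    have := hΦp k
    BoundedContinuousFunction.integrable (Φ k) (star y.toBCF * X j)
  have hLb : L '' B ⊆ Metric.closedBall 0 1 := by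
    rintro _ ⟨y, hy, rfl⟩
    rw [mem_closedBall_zero_iff, pi_norm_le_iff_of_nonneg zero_le_one]
    intro q
    have := hΦp q.1
    refine (norm_integral_le_of_norm_le_const (C := 1)
      (Filter.Eventually.of_forall fun t => ?_)).trans (by simp)
    rw [norm_mul, RCLike.norm_conj]
    exact mul_le_one₀ ((hpt y t).trans hy.1) (norm_nonneg _)
      (((X q.2).norm_coe_le_norm t).trans (hX.1 _))
  have hLt : TotallyBounded (L '' B) := (isCompact_closedBall _ _).totallyBounded.subset hLb
  -- The radius is chosen so that `N` squares of numbers below `η` add up to at most `ε² / 4`.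
  obtain ⟨η, hη, hηN⟩ : ∃ η : ℝ, 0 < η ∧ N * η ^ 2 ≤ ε ^ 2 / 4 := by
    refine ⟨ε / (2 * (N + 1)), by positivity, ?_⟩
    have h0 : (0 : ℝ) ≤ N := Nat.cast_nonneg N
    rw [div_pow, mul_div_assoc', div_le_div_iff₀ (by positivity) (by positivity)]
    nlinarith [mul_nonneg (sq_nonneg ε) h0, mul_nonneg (sq_nonneg ε) (mul_nonneg h0 h0),
      sq_nonneg ε]
  obtain ⟨t, htB, htf, htc⟩ := Metric.finite_approx_of_totallyBounded hLt η hη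
  obtain ⟨m, ⟨e⟩⟩ := htf.exists_equiv_fin
  choose z hzB hz using fun l : Fin m => htB (e.symm l).2
  refine ⟨m, z, fun l => hzB l, fun y hy1 hy2 => ?_⟩
  have hyt := htc ⟨y, ⟨hy1, hy2⟩, rfl⟩
  obtain ⟨u, hu, hyu⟩ := Set.mem_iUnion₂.1 hyt
  refine ⟨e ⟨u, hu⟩, ?_⟩
  set x := z (e ⟨u, hu⟩) with hx
  have hLx : L x = u := by rw [hx, hz]; simp
  have hxB : x ∈ B := hzB _
  rw [Metric.mem_ball, ← hLx] at hyu
  have hkey : ∀ k, (∑' i : ℕ,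
      ‖∫ t, (starRingEnd ℂ) (y t - x t) * X (i + k) t ∂(Φ k)‖ ^ 2) ≤ ε ^ 2 / 2 := by
    intro k
    have := hΦp k
    refine Real.tsum_le_of_sum_range_le (fun _ => by positivity) fun n => ?_
    let a : ℕ → ℝ := fun j => ‖∫ t, (starRingEnd ℂ) (y t - x t) * X j t ∂(Φ k)‖ ^ 2
    have ha : ∀ j, 0 ≤ a j := fun j => by positivity
    have htail : ∀ T : Finset ℕ, (∀ j ∈ T, N ≤ j) → ∑ j ∈ T, a j ≤ ε ^ 2 / 4 := by
      intro T hT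
      refine sum_sq_integral_le (Φ k) X (y - x) T _ ?_
      filter_upwards [hCae k] with t ht
      rcases t with p | q
      · have h1 := hN T hT p (ht p rfl)
        have h2 : ‖(y - x) (Sum.inl p)‖ ≤ 2 := by
          refine (norm_sub_le _ _).trans ?_
          exact (add_le_add ((hpt y (Sum.inl p)).trans hy1)
            ((hpt x (Sum.inl p)).trans hxB.1)).trans (by norm_num)
        have h3 : ‖(y - x) (Sum.inl p)‖ ^ 2 ≤ 4 := by
          nlinarith [norm_nonneg ((y - x) (Sum.inl p))]
        calc _ ≤ 4 * (ε ^ 2 / 16) :=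
              mul_le_mul h3 h1 (Finset.sum_nonneg fun _ _ => by positivity) (by norm_num)
          _ = ε ^ 2 / 4 := by ring
      · have h1 : (y - x) (Sum.inr q) = 0 := by simp [hy2 q, hxB.2 q]
        rw [h1]
        simp
        positivity
    -- Indices `i + k` below `N` can only occur when `k < N`.
    have hhead : ∑ j ∈ (Finset.Ico k (k + n)).filter (· < N), a j ≤ ε ^ 2 / 4 := by
      refine le_trans ?_ hηN
      calc _ ≤ ∑ j ∈ (Finset.Ico k (k + n)).filter (· < N), η ^ 2 := by
            refine Finset.sum_le_sum fun j hj => ?_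
            simp only [Finset.mem_filter, Finset.mem_Ico] at hj
            have hq := (dist_le_pi_dist (L y) (L x)
              (⟨k, by omega⟩, ⟨j, hj.2⟩)).trans hyu.le
            refine pow_le_pow_left₀ (norm_nonneg _) (le_trans (le_of_eq ?_) hq) 2
            rw [dist_eq_norm]
            simp only [L]
            rw [← integral_sub (hint y j k) (hint x j k)]
            simp only [map_sub, sub_mul]
        _ = ((Finset.Ico k (k + n)).filter (· < N)).card * η ^ 2 := by simp
        _ ≤ N * η ^ 2 := by
            have hcard : ((Finset.Ico k (k + n)).filter (· < N)).card ≤ N := by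
              calc _ ≤ (Finset.range N).card := Finset.card_le_card fun j hj => by
                    simp only [Finset.mem_filter] at hj
                    simpa using hj.2
                _ = N := by simp
            gcongr
    have hsplit : ∑ i ∈ Finset.range n, a (i + k) = ∑ j ∈ Finset.Ico k (k + n), a j := by
      rw [Finset.sum_Ico_eq_sum_range]
      simp [add_comm]
    change ∑ i ∈ Finset.range n, a (i + k) ≤ _
    rw [hsplit, ← Finset.sum_filter_add_sum_filter_not _ (· < N)]
    have := htail ((Finset.Ico k (k + n)).filter (fun j => ¬ j < N)) fun j hj => by
      simp only [Finset.mem_filter] at hj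
      omega
    linarith
  calc dXPhi X Φ y x ≤ Real.sqrt (ε ^ 2 / 2) := Real.sqrt_le_sqrt (ciSup_le hkey)
    _ < ε := by
      rw [Real.sqrt_lt' hε]
      have : 0 < ε ^ 2 := by positivity
      linarith
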